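/- For every real x > 0, ∫_{−1}^{1} (μ/√(1 − μ²)) · exp(−x(1 − μ²)/2) · erf(√(x/2)·(μ + 1)) dμ = √(π/(2x)) · (1 − exp(−x) · I_0(x)). -/

import Mathlib

open MeasureTheory Real intervalIntegral

/-- Modified Bessel function of the first kind of integer order `n`. -/
noncomputable def besselI (n : ℕ) (x : ℝ) : ℝ :=
  ∑' k : ℕ, (x / 2) ^ (n + 2 * k) / (Nat.factorial k * Nat.factorial (n + k))

/-- The error function `erf(z) = (2/√π) ∫₀ᶻ exp(−u²) du`. -/
noncomputable def erf (z : ℝ) : ℝ :=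
  (2 / Real.sqrt Real.pi) * ∫ u in (0:ℝ)..z, Real.exp (-u ^ 2)

/-!
Integrating by parts turns the integrand into `erf (a √(1 - μ²)) exp (-a² (μ + 1)²)`, up to a
constant, where `a = √(x / 2)`. Since `erf (a s)` is a Gaussian integral over `[-s, s]`, this
iterated integral is the integral of `exp (-a² (v² + u²))` over the disc `(v - 1)² + u² < 1`. The
disc passes through the origin, so in polar coordinates it is `r < 2 cos θ`: the radial integral is
elementary and the angular one is an integral representation of `I₀`.
-/

theorem integral_cos_pow_even_neg_pi_pi (k : ℕ) :
    ∫ t in (-π)..π, cos t ^ (2 * k) = 2 * π * (k.centralBinom / 4 ^ k) := by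
  induction k with
  | zero => simp [two_mul]
  | succ k ih =>
    have hbinom : ((k : ℝ) + 1) * (k + 1).centralBinom = 2 * (2 * k + 1) * k.centralBinom :=
      mod_cast Nat.succ_mul_centralBinom_succ k
    rw [mul_add, mul_one, integral_cos_pow, ih, sin_neg, sin_pi]
    simp only [pow_succ, mul_zero, neg_zero, sub_zero, zero_div, zero_add]
    push_cast
    field_simp
    linear_combination -2 * hbinom

theorem integral_cos_pow_odd_neg_pi_pi (k : ℕ) :
    ∫ t in (-π)..π, cos t ^ (2 * k + 1) = 0 := by
  simpa using integral_sin_pow_mul_cos_pow_odd (a := -π) (b := π) 0 k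

theorem hasSum_integral_exp_mul {f : ℝ → ℝ} {a b : ℝ} (hf : ContinuousOn f (Set.uIcc a b))
    (x : ℝ) :
    HasSum (fun n : ℕ ↦ x ^ n / n.factorial * ∫ t in a..b, f t ^ n)
      (∫ t in a..b, exp (x * f t)) := by
  obtain ⟨C, hC⟩ := isCompact_uIcc.exists_bound_of_continuousOn hf
  simp_rw [← intervalIntegral.integral_const_mul]
  refine intervalIntegral.hasSum_integral_of_dominated_convergence
    (fun n _ ↦ (|x| * C) ^ n / n.factorial) (fun n ↦ ?_) (fun n ↦ .of_forall fun t ht ↦ ?_)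
    (.of_forall fun t _ ↦ Real.summable_pow_div_factorial _) intervalIntegrable_const
    (.of_forall fun t _ ↦ ?_)
  · exact (((hf.pow n).const_mul _).mono Set.uIoc_subset_uIcc).aestronglyMeasurable
      measurableSet_uIoc
  · have hft : |f t| ≤ C := hC t (Set.uIoc_subset_uIcc ht)
    rw [norm_mul, norm_div, norm_pow, norm_pow, RCLike.norm_natCast, norm_eq_abs, norm_eq_abs,
      div_mul_eq_mul_div, ← mul_pow]
    gcongr
  · simpa only [mul_pow, div_mul_eq_mul_div, Real.exp_eq_exp_ℝ] using
      NormedSpace.expSeries_div_hasSum_exp (x * f t)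

theorem integral_exp_mul_cos (x : ℝ) :
    ∫ t in (-π)..π, exp (x * cos t) = 2 * π * besselI 0 x := by
  have hsum := hasSum_integral_exp_mul (a := -π) (b := π) continuous_cos.continuousOn x
  have hodd : ∀ n ∉ Set.range (2 * · : ℕ → ℕ),
      x ^ n / n.factorial * ∫ t in (-π)..π, cos t ^ n = 0 := by
    intro n hn
    obtain ⟨k, rfl | rfl⟩ := Nat.even_or_odd' n
    · exact absurd ⟨k, rfl⟩ hn
    · rw [integral_cos_pow_odd_neg_pi_pi, mul_zero]
  rw [← hsum.tsum_eq, ← (mul_right_injective₀ two_ne_zero).tsum_eq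
    (Function.support_subset_iff'.2 hodd), besselI, ← tsum_mul_left]
  congr 1 with k
  have hfactorial : ((2 * k).factorial : ℝ) = k.centralBinom * k.factorial * k.factorial := by
    have := Nat.choose_mul_factorial_mul_factorial (Nat.le_mul_of_pos_left k two_pos)
    rw [← Nat.centralBinom_eq_two_mul_choose, two_mul, Nat.add_sub_cancel_left, ← two_mul] at this
    exact_mod_cast this.symm
  have := k.centralBinom_ne_zero
  have hfour : (2 : ℝ) ^ (2 * k) = 4 ^ k := by rw [pow_mul]; norm_num
  rw [integral_cos_pow_even_neg_pi_pi, hfactorial, zero_add, zero_add, div_pow, hfour]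
  field_simp

theorem besselI_neg (n : ℕ) (x : ℝ) : besselI n (-x) = (-1) ^ n * besselI n x := by
  rw [besselI, besselI, ← tsum_mul_left]
  congr 1 with k
  rw [neg_div, neg_pow, pow_add (-1 : ℝ), pow_mul, neg_one_sq, one_pow]
  ring

theorem integral_exp_neg_mul_cos_sq (x : ℝ) :
    ∫ t in (-(π / 2))..(π / 2), exp (-(2 * x) * cos t ^ 2) = π * (exp (-x) * besselI 0 x) := by
  have hexp (t : ℝ) : exp (-(2 * x) * cos t ^ 2) = exp (-x) * exp (-x * cos (2 * t)) := by
    rw [← exp_add, cos_two_mul]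
    ring_nf
  calc
    _ = exp (-x) * ∫ t in (-(π / 2))..(π / 2), exp (-x * cos (2 * t)) := by
      simp_rw [hexp, intervalIntegral.integral_const_mul]
    _ = exp (-x) * (2⁻¹ * ∫ t in (-π)..π, exp (-x * cos t)) := by
      rw [intervalIntegral.integral_comp_mul_left (fun t ↦ exp (-x * cos t)) two_ne_zero,
        mul_neg, mul_div_cancel₀ π two_ne_zero, smul_eq_mul]
    _ = π * (exp (-x) * besselI 0 x) := by
      rw [integral_exp_mul_cos, besselI_neg]
      ring

theorem hasDerivAt_erf (z : ℝ) : HasDerivAt erf (2 / √π * exp (-z ^ 2)) z :=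
  ((by fun_prop : Continuous fun u : ℝ ↦ exp (-u ^ 2)).integral_hasStrictDerivAt 0 z).hasDerivAt
    |>.const_mul _

@[fun_prop]
theorem continuous_erf : Continuous erf :=
  continuous_iff_continuousAt.2 fun z ↦ (hasDerivAt_erf z).continuousAt

@[simp]
theorem erf_zero : erf 0 = 0 := by simp [erf]

theorem erf_eq_integral_neg_self (z : ℝ) : erf z = (∫ u in (-z)..z, exp (-u ^ 2)) / √π := by
  have hint (c d : ℝ) : IntervalIntegrable (fun u : ℝ ↦ exp (-u ^ 2)) volume c d :=
    Continuous.intervalIntegrable (by fun_prop) c d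
  have heven : ∫ u in (-z)..0, exp (-u ^ 2) = ∫ u in (0 : ℝ)..z, exp (-u ^ 2) := by
    have := intervalIntegral.integral_comp_neg (a := 0) (b := z) fun u ↦ exp (-u ^ 2)
    simpa only [neg_sq, neg_zero] using this.symm
  rw [erf, ← integral_add_adjacent_intervals (hint (-z) 0) (hint 0 z), heven]
  ring

theorem erf_mul (a s : ℝ) : erf (a * s) = a / √π * ∫ u in (-s)..s, exp (-a ^ 2 * u ^ 2) := by
  have hscale := mul_integral_comp_mul_left (a := -s) (b := s) (f := fun u ↦ exp (-u ^ 2)) (c := a)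
  simp_rw [neg_mul, ← mul_pow]
  rw [erf_eq_integral_neg_self, ← mul_neg, ← hscale]
  ring

theorem hasDerivAt_erf_mul_sqrt_one_sub_sq (a : ℝ) {μ : ℝ} (hμ : 0 < 1 - μ ^ 2) :
    HasDerivAt (fun μ ↦ erf (a * √(1 - μ ^ 2)))
      (-(2 * a / √π) * (μ / √(1 - μ ^ 2) * exp (-a ^ 2 * (1 - μ ^ 2)))) μ := by
  have hexponent : -(a * √(1 - μ ^ 2)) ^ 2 = -a ^ 2 * (1 - μ ^ 2) := by
    rw [mul_pow, sq_sqrt hμ.le, neg_mul]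
  have hsqrt := (((hasDerivAt_pow 2 μ).const_sub 1).sqrt hμ.ne').const_mul a
  convert! (hasDerivAt_erf (a * √(1 - μ ^ 2))).comp μ hsqrt using 1
  rw [hexponent]
  push_cast
  ring

theorem integral_div_sqrt_mul_exp_mul_erf {a : ℝ} (ha : a ≠ 0) :
    ∫ μ in (-1 : ℝ)..1, μ / √(1 - μ ^ 2) * exp (-a ^ 2 * (1 - μ ^ 2)) * erf (a * (μ + 1)) =
      ∫ μ in (-1 : ℝ)..1, erf (a * √(1 - μ ^ 2)) * exp (-a ^ 2 * (μ + 1) ^ 2) := by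
  let u μ := erf (a * (μ + 1))
  let v μ := erf (a * √(1 - μ ^ 2))
  let u' μ := 2 * a / √π * exp (-a ^ 2 * (μ + 1) ^ 2)
  let v' μ := -(2 * a / √π) * (μ / √(1 - μ ^ 2) * exp (-a ^ 2 * (1 - μ ^ 2)))
  have hu (μ : ℝ) : HasDerivAt u (u' μ) μ := by
    convert! (hasDerivAt_erf (a * (μ + 1))).comp μ (((hasDerivAt_id μ).add_const 1).const_mul a)
      using 1
    simp only [u', mul_pow, neg_mul]
    ring
  have hv : ∀ μ ∈ Set.Ioo (min (-1 : ℝ) 1) (max (-1) 1), HasDerivAt v (v' μ) μ := by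
    intro μ hμ
    obtain ⟨hlower, hupper⟩ : -1 < μ ∧ μ < 1 := by simpa using hμ
    exact hasDerivAt_erf_mul_sqrt_one_sub_sq a (by nlinarith)
  have hv'int : IntervalIntegrable v' volume (-1) 1 := by
    convert! Polynomial.Chebyshev.intervalIntegrable_sqrt_one_sub_sq_inv.continuousOn_mul
      (g := fun μ ↦ -(2 * a / √π) * (μ * exp (-a ^ 2 * (1 - μ ^ 2)))) (by fun_prop) using 2 with μ
    simp only [v', sqrt_inv]
    ring
  have hparts := integral_mul_deriv_eq_deriv_mul_of_hasDerivAt (by fun_prop) (by fun_prop)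
    (fun μ _ ↦ hu μ) hv (Continuous.intervalIntegrable (by fun_prop) _ _) hv'int
  have hboundary : u 1 * v 1 - u (-1) * v (-1) = 0 := by simp [u, v]
  rw [hboundary, zero_sub] at hparts
  have hc : -(2 * a / √π) ≠ 0 := neg_ne_zero.2 (by positivity)
  refine mul_left_cancel₀ hc ?_
  calc
    _ = ∫ μ in (-1 : ℝ)..1, u μ * v' μ := by
      rw [← intervalIntegral.integral_const_mul]
      congr 1 with μ
      ring
    _ = -∫ μ in (-1 : ℝ)..1, u' μ * v μ := hparts
    _ = _ := by
      rw [neg_mul, ← intervalIntegral.integral_const_mul]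
      congr 2 with μ
      ring

section

variable {E : Type*} [NormedAddCommGroup E] [NormedSpace ℝ E]

theorem setIntegral_regionBetween {α : Type*} [MeasurableSpace α] {μ : Measure α} [SFinite μ]
    {f g : α → ℝ} {s : Set α} (hf : Measurable f) (hg : Measurable g) (hs : MeasurableSet s)
    {F : α × ℝ → E} (hF : IntegrableOn F (regionBetween f g s) (μ.prod volume)) :
    ∫ p in regionBetween f g s, F p ∂μ.prod volume =
      ∫ x in s, (∫ y in Set.Ioo (f x) (g x), F (x, y)) ∂μ := by
  have hmeas := measurableSet_regionBetween hf hg hs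
  rw [← MeasureTheory.integral_indicator hmeas,
    integral_prod _ ((integrable_indicator_iff hmeas).2 hF),
    ← MeasureTheory.integral_indicator hs]
  congr 1 with x
  by_cases hx : x ∈ s
  · have hslice : Prod.mk x ⁻¹' regionBetween f g s = Set.Ioo (f x) (g x) := by
      ext y
      simp [regionBetween, hx]
    rw [Set.indicator_of_mem hx, ← MeasureTheory.integral_indicator measurableSet_Ioo, ← hslice]
    rfl
  · simp [regionBetween, hx]

theorem integrableOn_comp_polarCoord_symm {f : ℝ × ℝ → E} {s : Set (ℝ × ℝ)}
    (hs : MeasurableSet s) (hf : IntegrableOn f s) :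
    IntegrableOn (fun p ↦ p.1 • f (polarCoord.symm p))
      (polarCoord.target ∩ polarCoord.symm ⁻¹' s) := by
  have hmeas : MeasurableSet (polarCoord.target ∩ polarCoord.symm ⁻¹' s) :=
    polarCoord.open_target.measurableSet.inter (continuous_polarCoord_symm.measurable hs)
  have himage : polarCoord.symm '' (polarCoord.target ∩ polarCoord.symm ⁻¹' s) ⊆ s :=
    Set.image_subset_iff.2 Set.inter_subset_right
  refine IntegrableOn.congr_fun ((integrableOn_image_iff_integrableOn_abs_det_fderiv_smul volume
    hmeas (fun p _ ↦ (hasFDerivAt_polarCoord_symm p).hasFDerivWithinAt)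
    (polarCoord.symm.injOn.mono Set.inter_subset_left) f).1 (hf.mono_set himage))
    (fun p hp ↦ ?_) hmeas
  have hr : 0 < p.1 := hp.1.1
  simp only [det_fderivPolarCoordSymm, abs_of_pos hr]

theorem setIntegral_comp_polarCoord_symm {s : Set (ℝ × ℝ)} (hs : MeasurableSet s)
    (f : ℝ × ℝ → E) :
    ∫ p in polarCoord.target ∩ polarCoord.symm ⁻¹' s, p.1 • f (polarCoord.symm p) =
      ∫ p in s, f p := by
  rw [← MeasureTheory.integral_indicator hs, ← integral_comp_polarCoord_symm,
    ← setIntegral_indicator (continuous_polarCoord_symm.measurable hs)]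
  congr 1 with p
  exact Set.indicator_smul_apply (polarCoord.symm ⁻¹' s) Prod.fst (f ∘ polarCoord.symm) p

end

/-- The open disc of diameter `d` centred at `(d / 2, 0)`, whose boundary circle passes through the
origin; its equation is `r < d * cos θ` in polar coordinates. -/
def tangentDisc (d : ℝ) : Set (ℝ × ℝ) := {p | p.1 ^ 2 + p.2 ^ 2 < d * p.1}

namespace tangentDisc

variable {d : ℝ}

theorem measurableSet : MeasurableSet (tangentDisc d) :=
  (isOpen_lt (by fun_prop) (by fun_prop)).measurableSet

theorem integrableOn {E : Type*} [NormedAddCommGroup E] {f : ℝ × ℝ → E} (hf : Continuous f) :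
    IntegrableOn f (tangentDisc d) := by
  refine (hf.continuousOn.integrableOn_compact (isCompact_Icc.prod isCompact_Icc)).mono_set
    (t := Set.Icc (-|d|) |d| ×ˢ Set.Icc (-|d|) |d|) ?_
  rintro ⟨v, u⟩ (h : v ^ 2 + u ^ 2 < d * v)
  have hsq : v ^ 2 + 2 * u ^ 2 < d ^ 2 := by linarith [two_mul_le_add_sq d v]
  exact ⟨abs_le.1 (sq_le_sq.1 (by nlinarith)), abs_le.1 (sq_le_sq.1 (by nlinarith))⟩

theorem eq_regionBetween (hd : 0 ≤ d) : tangentDisc d =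
    regionBetween (fun v ↦ -√(d * v - v ^ 2)) (fun v ↦ √(d * v - v ^ 2)) (Set.Ioo 0 d) := by
  ext ⟨v, u⟩
  simp only [tangentDisc, regionBetween, Set.mem_ofPred_eq, Set.mem_Ioo, ← Real.sq_lt]
  constructor
  · intro h
    refine ⟨⟨?_, ?_⟩, ?_⟩ <;> nlinarith
  · rintro ⟨-, h⟩
    linarith

theorem polarCoord_preimage (hd : 0 ≤ d) :
    polarCoord.target ∩ polarCoord.symm ⁻¹' tangentDisc d =
      Prod.swap ⁻¹' regionBetween 0 (fun t ↦ d * cos t) (Set.Ioo (-(π / 2)) (π / 2)) := by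
  ext ⟨r, t⟩
  have hnorm : (r * cos t) ^ 2 + (r * sin t) ^ 2 = r * r := by
    linear_combination r ^ 2 * cos_sq_add_sin_sq t
  simp only [polarCoord_target, tangentDisc, regionBetween, Set.mem_inter_iff, Set.mem_prod,
    Set.mem_preimage, polarCoord_symm_apply, Set.mem_ofPred_eq, Set.mem_Ioi, Set.mem_Ioo,
    Prod.swap_prod_mk, Pi.zero_apply, hnorm, mul_left_comm d r]
  constructor
  · rintro ⟨⟨hr, ht⟩, hlt⟩
    have hrt : r < d * cos t := lt_of_mul_lt_mul_left hlt hr.le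
    have hcos : 0 < cos t := pos_of_mul_pos_right (hr.trans hrt) hd
    refine ⟨abs_lt.1 (not_le.1 fun hle ↦ hcos.not_ge ?_), hr, hrt⟩
    rw [← cos_abs]
    exact cos_nonpos_of_pi_div_two_le_of_le hle (by linarith [abs_lt.2 ht, pi_pos])
  · rintro ⟨ht, hr, hrt⟩
    exact ⟨⟨hr, by linarith [pi_pos], by linarith [pi_pos]⟩, mul_lt_mul_of_pos_left hrt hr⟩

variable {E : Type*} [NormedAddCommGroup E] [NormedSpace ℝ E] {f : ℝ × ℝ → E}

theorem setIntegral_eq (hd : 0 ≤ d) (hf : IntegrableOn f (tangentDisc d)) :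
    ∫ p in tangentDisc d, f p =
      ∫ v in (0 : ℝ)..d, ∫ u in (-√(d * v - v ^ 2))..√(d * v - v ^ 2), f (v, u) := by
  rw [eq_regionBetween hd] at hf ⊢
  rw [Measure.volume_eq_prod, setIntegral_regionBetween (by fun_prop) (by fun_prop)
    measurableSet_Ioo hf, integral_of_le hd, integral_Ioc_eq_integral_Ioo]
  congr 1 with v
  rw [integral_of_le (neg_le_self (sqrt_nonneg _)), integral_Ioc_eq_integral_Ioo]

theorem setIntegral_eq_polar (hd : 0 ≤ d) (hf : IntegrableOn f (tangentDisc d)) :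
    ∫ p in tangentDisc d, f p =
      ∫ t in (-(π / 2))..(π / 2), ∫ r in (0 : ℝ)..d * cos t, r • f (r * cos t, r * sin t) := by
  let R := regionBetween 0 (fun t ↦ d * cos t) (Set.Ioo (-(π / 2)) (π / 2))
  let F : ℝ × ℝ → E := fun p ↦ p.1 • f (polarCoord.symm p)
  have hswap : MeasurePreserving Prod.swap (volume : Measure (ℝ × ℝ)) volume :=
    Measure.measurePreserving_swap
  have hemb : MeasurableEmbedding (Prod.swap : ℝ × ℝ → ℝ × ℝ) :=
    MeasurableEquiv.prodComm.measurableEmbedding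
  have hF : IntegrableOn (F ∘ Prod.swap) R := by
    rw [← hswap.integrableOn_comp_preimage hemb, ← polarCoord_preimage hd]
    exact integrableOn_comp_polarCoord_symm measurableSet hf
  have hpi : -(π / 2) ≤ π / 2 := by linarith [pi_pos]
  calc
    ∫ p in tangentDisc d, f p = ∫ p in Prod.swap ⁻¹' R, F p := by
      rw [← polarCoord_preimage hd, setIntegral_comp_polarCoord_symm measurableSet]
    _ = ∫ q in R, F q.swap := hswap.setIntegral_preimage_emb hemb (F ∘ Prod.swap) R
    _ = ∫ t in Set.Ioo (-(π / 2)) (π / 2), ∫ r in Set.Ioo 0 (d * cos t), F (r, t) :=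
      setIntegral_regionBetween measurable_const (by fun_prop) measurableSet_Ioo hF
    _ = ∫ t in (-(π / 2))..(π / 2), ∫ r in (0 : ℝ)..d * cos t, F (r, t) := by
      rw [integral_of_le hpi, integral_Ioc_eq_integral_Ioo]
      refine setIntegral_congr_fun measurableSet_Ioo fun t ht ↦ ?_
      have hcos : 0 ≤ d * cos t := mul_nonneg hd (cos_pos_of_mem_Ioo ht).le
      simp only [integral_of_le hcos, integral_Ioc_eq_integral_Ioo]

end tangentDisc

theorem integral_mul_exp_neg_mul_sq {b : ℝ} (hb : b ≠ 0) (R : ℝ) :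
    ∫ r in (0 : ℝ)..R, r * exp (-b * r ^ 2) = (1 - exp (-b * R ^ 2)) / (2 * b) := by
  have hderiv (r : ℝ) :
      HasDerivAt (fun r ↦ -exp (-b * r ^ 2) / (2 * b)) (r * exp (-b * r ^ 2)) r := by
    convert! (((hasDerivAt_pow 2 r).const_mul (-b)).exp.neg).div_const (2 * b) using 1
    push_cast
    field_simp
  rw [integral_eq_sub_of_hasDerivAt (fun r _ ↦ hderiv r)
    (Continuous.intervalIntegrable (by fun_prop) _ _), zero_pow two_ne_zero, mul_zero, exp_zero]
  ring

theorem setIntegral_tangentDisc_exp_neg_mul_sq {d b : ℝ} (hd : 0 ≤ d) (hb : b ≠ 0) :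
    ∫ p in tangentDisc d, exp (-b * (p.1 ^ 2 + p.2 ^ 2)) =
      π / (2 * b) * (1 - exp (-(b * d ^ 2 / 2)) * besselI 0 (b * d ^ 2 / 2)) := by
  have hradial (t : ℝ) : ∫ r in (0 : ℝ)..d * cos t,
      r • exp (-b * ((r * cos t) ^ 2 + (r * sin t) ^ 2)) =
        (1 - exp (-(2 * (b * d ^ 2 / 2)) * cos t ^ 2)) / (2 * b) := by
    simp_rw [smul_eq_mul, mul_pow, ← mul_add, cos_sq_add_sin_sq, mul_one]
    rw [integral_mul_exp_neg_mul_sq hb]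
    ring_nf
  rw [tangentDisc.setIntegral_eq_polar hd (tangentDisc.integrableOn (by fun_prop))]
  simp_rw [hradial]
  rw [intervalIntegral.integral_div, intervalIntegral.integral_sub intervalIntegrable_const
    (Continuous.intervalIntegrable (by fun_prop) _ _), integral_exp_neg_mul_cos_sq,
    intervalIntegral.integral_const, smul_eq_mul]
  ring

theorem integral_erf_mul_exp_eq_setIntegral_tangentDisc {d : ℝ} (hd : 0 ≤ d) (a : ℝ) :
    ∫ v in (0 : ℝ)..d, erf (a * √(d * v - v ^ 2)) * exp (-a ^ 2 * v ^ 2) =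
      a / √π * ∫ p in tangentDisc d, exp (-a ^ 2 * (p.1 ^ 2 + p.2 ^ 2)) := by
  rw [tangentDisc.setIntegral_eq hd (tangentDisc.integrableOn (by fun_prop)),
    ← intervalIntegral.integral_const_mul]
  congr 1 with v
  simp_rw [mul_add, exp_add, intervalIntegral.integral_const_mul]
  rw [erf_mul]
  ring

theorem integral_div_sqrt_mul_exp_mul_erf_eq_besselI {a : ℝ} (ha : a ≠ 0) :
    ∫ μ in (-1 : ℝ)..1, μ / √(1 - μ ^ 2) * exp (-a ^ 2 * (1 - μ ^ 2)) * erf (a * (μ + 1)) =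
      √π / (2 * a) * (1 - exp (-(2 * a ^ 2)) * besselI 0 (2 * a ^ 2)) := by
  have hshift := intervalIntegral.integral_comp_add_right (a := -1) (b := 1)
    (fun v ↦ erf (a * √(2 * v - v ^ 2)) * exp (-a ^ 2 * v ^ 2)) 1
  rw [neg_add_cancel, one_add_one_eq_two] at hshift
  calc
    _ = ∫ μ in (-1 : ℝ)..1, erf (a * √(1 - μ ^ 2)) * exp (-a ^ 2 * (μ + 1) ^ 2) :=
      integral_div_sqrt_mul_exp_mul_erf ha
    _ = ∫ v in (0 : ℝ)..2, erf (a * √(2 * v - v ^ 2)) * exp (-a ^ 2 * v ^ 2) := by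
      rw [← hshift]
      congr! 6 with μ
      ring
    _ = a / √π * ∫ p in tangentDisc 2, exp (-a ^ 2 * (p.1 ^ 2 + p.2 ^ 2)) :=
      integral_erf_mul_exp_eq_setIntegral_tangentDisc zero_le_two a
    _ = √π / (2 * a) * (1 - exp (-(2 * a ^ 2)) * besselI 0 (2 * a ^ 2)) := by
      rw [setIntegral_tangentDisc_exp_neg_mul_sq zero_le_two (pow_ne_zero 2 ha),
        show a ^ 2 * 2 ^ 2 / 2 = 2 * a ^ 2 by ring]
      field_simp
      rw [sq_sqrt pi_pos.le]

/-- `∫_{−1}^{1} (μ/√(1−μ²)) e^(−x(1−μ²)/2) erf(√(x/2)(μ+1)) dμ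
  = √(π/(2x)) (1 − e^(−x) I₀(x))` for `x > 0`. -/
theorem integral_erf_eq_one_sub_exp_besselI (x : ℝ) (hx : 0 < x) :
    (∫ μ in (-1 : ℝ)..1,
        (μ / Real.sqrt (1 - μ ^ 2)) * Real.exp (-x * (1 - μ ^ 2) / 2) *
          erf (Real.sqrt (x / 2) * (μ + 1))) =
      Real.sqrt (Real.pi / (2 * x)) * (1 - Real.exp (-x) * besselI 0 x) := by
  have ha : 0 < √(x / 2) := by positivity
  have hsq : √(x / 2) ^ 2 = x / 2 := sq_sqrt (by positivity)
  have hprefactor : √(π / (2 * x)) = √π / (2 * √(x / 2)) := by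
    rw [show 2 * x = (2 * √(x / 2)) ^ 2 by rw [mul_pow, hsq]; ring,
      sqrt_div' π (by positivity), sqrt_sq (by positivity)]
  have hexponent (μ : ℝ) : -x * (1 - μ ^ 2) / 2 = -√(x / 2) ^ 2 * (1 - μ ^ 2) := by
    rw [hsq]
    ring
  simp_rw [hexponent]
  rw [integral_div_sqrt_mul_exp_mul_erf_eq_besselI ha.ne', hprefactor, hsq,
    mul_div_cancel₀ x two_ne_zero]
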